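/- Every finite subgroup of SO(3) acting on S² in the standard way has quotient S²/Γ homeomorphic to S². Consequently, for any finite Γ ⊂ SO(3), the quotient ℝ³/Γ is homeomorphic to ℝ³. -/

import Mathlib

open Matrix

attribute [local instance] starRingOfComm

/-- The orbit relation on a subset `S ⊆ ℝ³` of a group `Γ` of orthogonal matrices
acting in the standard (linear) way, via `mulVec`. -/
def soRel (Γ : Subgroup (Matrix.orthogonalGroup (Fin 3) ℝ))
    (S : Set (EuclideanSpace ℝ (Fin 3))) (x y : S) : Prop :=
  ∃ g ∈ Γ, (g : Matrix (Fin 3) (Fin 3) ℝ).mulVec (x : EuclideanSpace ℝ (Fin 3)) = y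

namespace SO3Q

/-- spinors -/
abbrev V := ℂ × ℂ
/-- euclidean 3-space -/
abbrev E := EuclideanSpace ℝ (Fin 3)

/-- squared norm of a spinor -/
noncomputable def nsq (v : V) : ℝ := Complex.normSq v.1 + Complex.normSq v.2

/-- the Hopf map -/
noncomputable def hopf (v : V) : E :=
  !₂[2 * (v.1.re * v.2.re + v.1.im * v.2.im), 2 * (v.1.im * v.2.re - v.1.re * v.2.im),
    Complex.normSq v.1 - Complex.normSq v.2]

/-- the symplectic form -/
def wedge (v w : V) : ℂ := v.1 * w.2 - v.2 * w.1

/-- matrix action -/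
noncomputable def act (M : Matrix (Fin 3) (Fin 3) ℝ) (x : E) : E := WithLp.toLp 2 (M *ᵥ x.ofLp)

lemma act_mul (M N : Matrix (Fin 3) (Fin 3) ℝ) (x : E) : act (M * N) x = act M (act N x) := by
  simp [act]

lemma nsq_nonneg (v : V) : 0 ≤ nsq v := add_nonneg (Complex.normSq_nonneg _) (Complex.normSq_nonneg _)

lemma nsq_eq_zero {v : V} : nsq v = 0 ↔ v = 0 := by
  unfold nsq
  rw [add_eq_zero_iff_of_nonneg (Complex.normSq_nonneg _) (Complex.normSq_nonneg _)]
  simp [Prod.ext_iff]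

lemma nsq_pos {v : V} (h : v ≠ 0) : 0 < nsq v :=
  lt_of_le_of_ne (nsq_nonneg v) (fun h' => h (nsq_eq_zero.1 h'.symm))

lemma nsq_smul (c : ℂ) (v : V) : nsq (c • v) = Complex.normSq c * nsq v := by
  simp [nsq]; ring

lemma norm_hopf (v : V) : ‖hopf v‖ = nsq v := by
  rw [EuclideanSpace.norm_eq, ← Real.sqrt_sq (nsq_nonneg v)]
  congr 1
  simp [Fin.sum_univ_three, hopf, nsq, Complex.normSq_apply]
  ring

lemma hopf_lagrange (p q : V) :
    ‖nsq q • hopf p - nsq p • hopf q‖ ^ 2 = 4 * nsq p * nsq q * Complex.normSq (wedge p q) := by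
  rw [EuclideanSpace.norm_sq_eq]
  simp [Fin.sum_univ_three, hopf, nsq, Complex.normSq_apply, wedge]
  ring

lemma wedge_eq_zero_iff {p q : V} (hp : p ≠ 0) (hq : q ≠ 0) :
    wedge p q = 0 ↔ nsq q • hopf p = nsq p • hopf q := by
  have h := hopf_lagrange p q
  have h1 := nsq_pos hp
  have h2 := nsq_pos hq
  constructor
  · intro h0
    rw [h0] at h
    simp at h
    exact sub_eq_zero.1 h
  · intro h0
    rw [h0] at h
    simp at h
    rcases h with h | h
    · rcases h with h | h <;> linarith
    · exact h

lemma exists_smul_of_wedge {p q : V} (hp : p ≠ 0) (h : wedge p q = 0) : ∃ c : ℂ, q = c • p := by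
  unfold wedge at h
  by_cases h1 : p.1 = 0
  · have h2 : p.2 ≠ 0 := fun h2 => hp (Prod.ext h1 h2)
    refine ⟨q.2 / p.2, Prod.ext ?_ ?_⟩
    · simp only [h1, zero_mul, zero_sub, neg_eq_zero, mul_eq_zero, h2, false_or] at h
      simp [h, h1]
    · simp; field_simp
  · refine ⟨q.1 / p.1, Prod.ext ?_ ?_⟩
    · simp; field_simp
    · simp; field_simp; linear_combination h

lemma wedge_self (p : V) : wedge p p = 0 := by unfold wedge; ring
lemma wedge_smul_right (c : ℂ) (p q : V) : wedge p (c • q) = c * wedge p q := by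
  simp [wedge]; ring
lemma wedge_smul_left (c : ℂ) (p q : V) : wedge (c • p) q = c * wedge p q := by
  simp [wedge]; ring

lemma hopf_surj (x : E) : ∃ v, hopf v = x := by
  have key : ∀ x : E, ‖x‖ ≠ 0 → ∃ v, hopf v = x := by
    intro x hx0
    have hx : ‖x‖ ^ 2 = x 0 ^ 2 + x 1 ^ 2 + x 2 ^ 2 := by
      rw [EuclideanSpace.norm_sq_eq]; simp [Fin.sum_univ_three]
    set r := ‖x‖ with hr
    have hr0 : 0 ≤ r := norm_nonneg x
    have hrp : 0 < r := lt_of_le_of_ne hr0 (Ne.symm hx0)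
    by_cases h : r + x 2 = 0
    · have h0 : x 0 = 0 := by
        have : x 2 = -r := by linarith
        rw [this] at hx; nlinarith [sq_nonneg (x 0), sq_nonneg (x 1)]
      have h1 : x 1 = 0 := by
        have : x 2 = -r := by linarith
        rw [this] at hx; nlinarith [sq_nonneg (x 0), sq_nonneg (x 1)]
      refine ⟨(0, (Real.sqrt r : ℂ)), ?_⟩
      ext i
      fin_cases i
      · simp [hopf, h0]
      · simp [hopf, h1]
      · simp [hopf, Complex.normSq_apply, Real.mul_self_sqrt hr0]; linarith
    · have hp : 0 < r + x 2 := by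
        refine lt_of_le_of_ne ?_ (Ne.symm h)
        have : |x 2| ≤ r := by
          apply abs_le_of_sq_le_sq _ hr0
          nlinarith [sq_nonneg (x 0), sq_nonneg (x 1)]
        linarith [neg_abs_le (x 2)]
      -- a = s, b = (x0 - i x1)/(2 s), s² = (r + x2)/2
      set s := Real.sqrt ((r + x 2) / 2) with hs
      have hs2 : s * s = (r + x 2) / 2 := Real.mul_self_sqrt (by linarith)
      have hsp : 0 < s := Real.sqrt_pos.2 (by linarith)
      refine ⟨((s : ℂ), ⟨x 0 / (2 * s), - x 1 / (2 * s)⟩), ?_⟩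
      ext i
      fin_cases i
      · simp [hopf]; field_simp
      · simp [hopf]; field_simp
      · simp [hopf, Complex.normSq_apply]
        have : x 0 / (2 * s) * (x 0 / (2 * s)) + -x 1 / (2 * s) * (-x 1 / (2 * s)) =
          (x 0 ^ 2 + x 1 ^ 2) / (4 * (s * s)) := by field_simp; ring
        rw [this, hs2]
        field_simp
        nlinarith
  by_cases hx : ‖x‖ = 0
  · refine ⟨0, ?_⟩
    rw [norm_eq_zero] at hx
    rw [hx, ← norm_eq_zero, norm_hopf, nsq_eq_zero]
  · exact key x hx

/-- linear map from coefficients -/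
noncomputable def lin (α β γ δ : ℂ) : V →ₗ[ℂ] V where
  toFun v := (α * v.1 + β * v.2, γ * v.1 + δ * v.2)
  map_add' x y := by ext <;> simp <;> ring
  map_smul' c x := by ext <;> simp <;> ring

/-- `U` lifts the matrix `M` -/
def IsLift (M : Matrix (Fin 3) (Fin 3) ℝ) (U : V →ₗ[ℂ] V) : Prop :=
  (∃ d : ℂ, d ≠ 0 ∧ ∀ v w, wedge (U v) (U w) = d * wedge v w) ∧ ∀ v, hopf (U v) = act M (hopf v)

lemma IsLift.comp {M N : Matrix (Fin 3) (Fin 3) ℝ} {U W : V →ₗ[ℂ] V} (hU : IsLift M U)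
    (hW : IsLift N W) : IsLift (M * N) (U ∘ₗ W) := by
  obtain ⟨⟨d, hd, h1⟩, h2⟩ := hU
  obtain ⟨⟨e, he, h3⟩, h4⟩ := hW
  refine ⟨⟨d * e, mul_ne_zero hd he, fun v w => ?_⟩, fun v => ?_⟩
  · simp [h1, h3, mul_assoc]
  · simp [h2, h4, act_mul]

lemma wedge_lin (α β γ δ : ℂ) (v w : V) :
    wedge (lin α β γ δ v) (lin α β γ δ w) = (α * δ - β * γ) * wedge v w := by
  simp [wedge, lin]; ring

/-- rotation matrix of a unit quaternion -/
def rotM (p q r s : ℝ) : Matrix (Fin 3) (Fin 3) ℝ :=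
  !![p^2 - q^2 - r^2 + s^2, -2*(p*q - r*s), 2*(p*r+q*s);
     2*(p*q + r*s), p^2 - q^2 + r^2 - s^2, 2*(q*r-p*s);
     -2*(p*r - q*s), 2*(p*s+q*r), p^2+q^2-r^2-s^2]

lemma rotM_orth (p q r s : ℝ) (h : p^2+q^2+r^2+s^2 = 1) : (rotM p q r s) * (rotM p q r s)ᵀ = 1 := by
  have h2 : (p^2+q^2+r^2+s^2)^2 = 1 := by rw [h]; norm_num
  ext i j
  fin_cases i <;> fin_cases j <;> simp [rotM, Matrix.mul_apply, Fin.sum_univ_three] <;>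
    first | ring1 | linear_combination h2

lemma rotM_det (p q r s : ℝ) (h : p^2+q^2+r^2+s^2 = 1) : (rotM p q r s).det = 1 := by
  have h2 : (p^2+q^2+r^2+s^2)^3 = 1 := by rw [h]; norm_num
  rw [Matrix.det_fin_three]
  simp [rotM]
  linear_combination h2

lemma rotM_lift (a b : ℂ) (h : nsq (a, b) = 1) :
    IsLift (rotM a.re a.im b.re b.im) (lin a (- star b) b (star a)) := by
  refine ⟨⟨_, ?_, wedge_lin _ _ _ _⟩, fun v => ?_⟩
  · have : a * star a - -star b * b = (nsq (a, b) : ℂ) := by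
      apply Complex.ext <;> simp [nsq, Complex.normSq_apply] <;> ring
    rw [this, h]; simp
  · ext i
    fin_cases i <;> simp [rotM, lin, hopf, act, Complex.normSq_apply, Matrix.mulVec, dotProduct, Fin.sum_univ_three] <;> ring

lemma exists_lift (M : Matrix (Fin 3) (Fin 3) ℝ) (hM : M * Mᵀ = 1) (hdet : M.det = 1) :
    ∃ U, IsLift M U := by
  have hM' : Mᵀ * M = 1 := mul_eq_one_comm.1 hM
  obtain ⟨v, hv⟩ := hopf_surj (act M !₂[0, 0, 1])
  have hn : nsq v = 1 := by
    rw [← norm_hopf, hv]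
    rw [EuclideanSpace.norm_eq, Real.sqrt_eq_one]
    have := congrFun (congrFun hM' 2) 2
    simp [Matrix.mul_apply, Fin.sum_univ_three] at this
    simp [act, Matrix.mulVec, dotProduct, Fin.sum_univ_three]
    linarith
  obtain ⟨a, b⟩ := v
  have hl := rotM_lift a b hn
  have hsum : a.re^2+a.im^2+b.re^2+b.im^2 = 1 := by
    simp [nsq, Complex.normSq_apply] at hn; linarith
  set A := rotM a.re a.im b.re b.im with hA
  have hA1 : A * Aᵀ = 1 := rotM_orth _ _ _ _ hsum
  have hA2 : A.det = 1 := rotM_det _ _ _ _ hsum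
  have hA1' : Aᵀ * A = 1 := mul_eq_one_comm.1 hA1
  set B := Aᵀ * M with hB
  have hMB : M = A * B := by rw [hB, ← mul_assoc, hA1, one_mul]
  have hBB : Bᵀ * B = 1 := by
    rw [hB, transpose_mul, transpose_transpose, mul_assoc, ← mul_assoc A, hA1, one_mul, hM']
  have hBd : B.det = 1 := by rw [hB, det_mul, det_transpose, hA2, hdet]; norm_num
  have hcol : ∀ i, M i 2 = A i 2 := by
    intro i
    have := congrArg (fun x : E => x i) hv
    fin_cases i <;> simp [hopf, act, Matrix.mulVec, dotProduct, Fin.sum_univ_three, Complex.normSq_apply] at this <;>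
      simp [hA, rotM] <;> linarith
  have hB2 : ∀ i, B i 2 = (1 : Matrix (Fin 3) (Fin 3) ℝ) i 2 := by
    intro i
    rw [← hA1']
    simp [hB, Matrix.mul_apply, hcol]
  have b02 : B 0 2 = 0 := by simpa using hB2 0
  have b12 : B 1 2 = 0 := by simpa using hB2 1
  have b22 : B 2 2 = 1 := by simpa using hB2 2
  have e := fun i j => congrFun (congrFun hBB i) j
  have e02 := e 0 2
  have e12 := e 1 2
  have e00 := e 0 0
  have e11 := e 1 1
  have e01 := e 0 1
  simp [Matrix.mul_apply, Fin.sum_univ_three, b02, b12, b22] at e02 e12 e00 e11 e01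
  rw [Matrix.det_fin_three] at hBd
  simp [b02, b12, b22, e02, e12] at hBd e00 e11 e01
  have f1 : B 1 1 = B 0 0 := by linear_combination B 0 0 * hBd - B 1 1 * e00 + B 1 0 * e01
  have f2 : B 0 1 = - B 1 0 := by linear_combination -B 1 0 * hBd - B 0 1 * e00 + B 0 0 * e01
  have hlB : IsLift B (lin ⟨B 0 0, B 1 0⟩ 0 0 1) := by
    refine ⟨⟨_, ?_, wedge_lin _ _ _ _⟩, fun v => ?_⟩
    · intro h0
      have h1 := congrArg Complex.re h0
      have h2 := congrArg Complex.im h0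
      simp at h1 h2
      rw [h1, h2] at e00
      simp at e00
    · ext i
      fin_cases i
      · simp [lin, hopf, act, Complex.normSq_apply, Matrix.mulVec, dotProduct, Fin.sum_univ_three, f2, b02]; ring
      · simp [lin, hopf, act, Complex.normSq_apply, Matrix.mulVec, dotProduct, Fin.sum_univ_three, f1, b12]; ring
      · simp [lin, hopf, act, Complex.normSq_apply, Matrix.mulVec, dotProduct, Fin.sum_univ_three, e02, e12, b22]
        linear_combination (v.1.re^2 + v.1.im^2) * e00
  rw [hMB]
  exact ⟨_, hl.comp hlB⟩

/-- binary forms of degree `N` -/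
def IsForm (N : ℕ) (φ : V → ℂ) : Prop :=
  ∃ P : Polynomial ℂ, P.natDegree ≤ N ∧ (∀ t s : ℂ, s ≠ 0 → φ (t, s) = s ^ N * P.eval (t / s)) ∧
    ∀ t, φ (t, 0) = P.coeff N * t ^ N

lemma IsForm.comb {N : ℕ} {φ ψ : V → ℂ} (h1 : IsForm N φ) (h2 : IsForm N ψ) (a b : ℂ) :
    IsForm N (fun w => a * φ w + b * ψ w) := by
  obtain ⟨P, hP, hP1, hP2⟩ := h1
  obtain ⟨Q, hQ, hQ1, hQ2⟩ := h2
  refine ⟨Polynomial.C a * P + Polynomial.C b * Q, ?_, ?_, ?_⟩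
  · refine Polynomial.natDegree_add_le_of_degree_le ?_ ?_
    · exact (Polynomial.natDegree_C_mul_le _ _).trans hP
    · exact (Polynomial.natDegree_C_mul_le _ _).trans hQ
  · intro t s hs
    simp [hP1 t s hs, hQ1 t s hs]; ring
  · intro t
    simp [hP2, hQ2]; ring

lemma IsForm.mul_wedge {N : ℕ} {φ : V → ℂ} (h1 : IsForm N φ) (p : V) :
    IsForm (N + 1) (fun w => wedge p w * φ w) := by
  obtain ⟨P, hP, hP1, hP2⟩ := h1
  have hd : (Polynomial.C (-p.2) * Polynomial.X + Polynomial.C p.1).natDegree ≤ 1 :=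
    Polynomial.natDegree_linear_le
  refine ⟨P * (Polynomial.C (-p.2) * Polynomial.X + Polynomial.C p.1), ?_, ?_, ?_⟩
  · exact Polynomial.natDegree_mul_le_of_le hP hd
  · intro t s hs
    simp [hP1 t s hs, wedge]; field_simp; ring
  · intro t
    rw [Polynomial.coeff_mul_add_eq_of_natDegree_le hP hd]
    simp [hP2, wedge, Polynomial.coeff_C]; ring

lemma isForm_prod {ι : Type*} (s : Finset ι) (p : ι → V) :
    IsForm s.card (fun w => ∏ i ∈ s, wedge (p i) w) := by
  classical
  induction s using Finset.induction_on with
  | empty => exact ⟨1, by simp, by simp, by simp⟩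
  | insert a s ha ih =>
    rw [Finset.card_insert_of_notMem ha]
    simp only [Finset.prod_insert ha]
    exact ih.mul_wedge (p a)

lemma IsForm.exists_root {N : ℕ} {φ : V → ℂ} (h : IsForm N φ) (hN : N ≠ 0) :
    ∃ v, v ≠ 0 ∧ φ v = 0 := by
  obtain ⟨P, hP, hP1, hP2⟩ := h
  by_cases h0 : P.coeff N = 0
  · exact ⟨(1, 0), by simp, by simp [hP2, h0]⟩
  · have : P.degree ≠ 0 := by
      intro hd
      have : P.natDegree = 0 := Polynomial.natDegree_eq_of_degree_eq_some hd
      apply h0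
      apply Polynomial.coeff_eq_zero_of_natDegree_lt
      omega
    obtain ⟨z, hz⟩ := IsAlgClosed.exists_root P this
    refine ⟨(z, 1), by simp, ?_⟩
    rw [hP1 _ _ one_ne_zero]
    simpa using hz

lemma IsForm.eq_zero {N : ℕ} {φ : V → ℂ} (h : IsForm N φ) {ι : Type*} [Fintype ι]
    (hN : N < Fintype.card ι) (p : ι → V) (hp : ∀ i, (p i).2 ≠ 0)
    (hw : ∀ i j, i ≠ j → wedge (p i) (p j) ≠ 0) (hz : ∀ i, φ (p i) = 0) (w : V) : φ w = 0 := by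
  obtain ⟨P, hP, hP1, hP2⟩ := h
  have hP0 : P = 0 := by
    refine Polynomial.eq_zero_of_natDegree_lt_card_of_eval_eq_zero P (f := fun i => (p i).1 / (p i).2)
      ?_ ?_ (hP.trans_lt hN)
    · intro i j hij
      by_contra hne
      apply hw i j hne
      have h1 := hp i
      have h2 := hp j
      simp only at hij
      rw [div_eq_div_iff h1 h2] at hij
      unfold wedge
      linear_combination hij
    · intro i
      have := hP1 (p i).1 (p i).2 (hp i)
      have h3 : φ ((p i).1, (p i).2) = 0 := hz i
      rw [h3] at this
      have h4 := this.symm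
      rw [mul_eq_zero] at h4
      exact h4.resolve_left (pow_ne_zero _ (hp i))
  subst hP0
  obtain ⟨t, s⟩ := w
  by_cases hs : s = 0
  · subst hs; simp [hP2]
  · simp [hP1 t s hs]

lemma dense_generic {ι : Type*} [Finite ι] (q : ι → V → ℂ)
    (ha : ∀ i, AnalyticOnNhd ℂ (q i) Set.univ) (hq : ∀ i, ∃ v, q i v ≠ 0) :
    Dense {z | ∀ i, q i z ≠ 0} := by
  have : {z | ∀ i, q i z ≠ 0} = ⋂ i, {z | q i z ≠ 0} := by ext; simp
  rw [this]
  apply dense_iInter_of_isOpen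
  · intro i
    have : Continuous (q i) := continuousOn_univ.1 (ha i).continuousOn
    exact isOpen_ne_fun this continuous_const
  · intro i
    have h : {z | q i z ≠ 0} = {z | q i z = 0}ᶜ := rfl
    rw [h, ← interior_eq_empty_iff_dense_compl, Set.eq_empty_iff_forall_notMem]
    intro z hz
    rw [mem_interior_iff_mem_nhds] at hz
    obtain ⟨v, hv⟩ := hq i
    exact hv ((ha i).eqOn_zero_of_preconnected_of_eventuallyEq_zero isPreconnected_univ
      (Set.mem_univ z) hz (Set.mem_univ v))

lemma analytic_fst (U : V →ₗ[ℂ] V) (z : V) : AnalyticAt ℂ (fun z => (U z).1) z :=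
  (LinearMap.toContinuousLinearMap (LinearMap.fst ℂ ℂ ℂ ∘ₗ U)).analyticAt z

lemma analytic_snd (U : V →ₗ[ℂ] V) (z : V) : AnalyticAt ℂ (fun z => (U z).2) z :=
  (LinearMap.toContinuousLinearMap (LinearMap.snd ℂ ℂ ℂ ∘ₗ U)).analyticAt z

lemma analytic_wedge (U W : V →ₗ[ℂ] V) :
    AnalyticOnNhd ℂ (fun z => wedge (U z) (W z)) Set.univ := fun z _ =>
  ((analytic_fst U z).mul (analytic_snd W z)).sub ((analytic_snd U z).mul (analytic_fst W z))

lemma analytic_wedge_const (U : V →ₗ[ℂ] V) (e : V) :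
    AnalyticOnNhd ℂ (fun z => wedge (U z) e) Set.univ := fun z _ =>
  ((analytic_fst U z).mul analyticAt_const).sub ((analytic_snd U z).mul analyticAt_const)

lemma hopf_continuous : Continuous hopf := by
  unfold hopf
  have : Continuous (fun v : V => ![2 * (v.1.re * v.2.re + v.1.im * v.2.im), 2 * (v.1.im * v.2.re - v.1.re * v.2.im),
    Complex.normSq v.1 - Complex.normSq v.2]) := by
    refine continuous_pi fun i => ?_
    fin_cases i
    · simp; fun_prop
    · simp; fun_prop
    · simp [Complex.normSq_apply]; fun_prop
  exact (PiLp.continuous_toLp 2 _).comp this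

lemma nsq_continuous : Continuous nsq := by
  unfold nsq; exact (Complex.continuous_normSq.comp continuous_fst).add (Complex.continuous_normSq.comp continuous_snd)

lemma isClosedMap_of_norm {k : V → E} (hk : Continuous k) (hn : ∀ v, ‖k v‖ = nsq v) :
    IsClosedMap k := by
  have : IsProperMap k := by
    rw [isProperMap_iff_tendsto_cocompact]
    refine ⟨hk, ?_⟩
    rw [← Metric.cobounded_eq_cocompact, ← Metric.cobounded_eq_cocompact,
      ← tendsto_norm_atTop_iff_cobounded]
    simp only [hn]
    have h1 : Filter.Tendsto (fun v : V => ‖v‖ ^ 2) (Bornology.cobounded V) Filter.atTop :=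
      (Filter.tendsto_pow_atTop two_ne_zero).comp tendsto_norm_cobounded_atTop
    refine Filter.tendsto_atTop_mono (fun v => ?_) h1
    rw [Prod.norm_def]
    have e1 := Complex.sq_norm v.1
    have e2 := Complex.sq_norm v.2
    unfold nsq
    rw [← e1, ← e2]
    rcases max_choice ‖v.1‖ ‖v.2‖ with h | h <;> rw [h] <;> nlinarith [sq_nonneg ‖v.1‖, sq_nonneg ‖v.2‖]
  exact this.isClosedMap

lemma wedge_of_hopf_eq {p q : V} (h : hopf p = hopf q) : wedge p q = 0 := by
  have hn : nsq p = nsq q := by rw [← norm_hopf, ← norm_hopf, h]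
  by_cases hp : p = 0
  · simp [hp, wedge]
  by_cases hq : q = 0
  · simp [hq, wedge]
  rw [wedge_eq_zero_iff hp hq, h, hn]

lemma hopf_eq_of_wedge {p q : V} (h : wedge p q = 0) (hn : nsq p = nsq q) : hopf p = hopf q := by
  by_cases hp : p = 0
  · have hq : q = 0 := nsq_eq_zero.1 (by rw [← hn, hp]; simp [nsq])
    rw [hp, hq]
  · have hq : q ≠ 0 := fun hq => hp (nsq_eq_zero.1 (by rw [hn, hq]; simp [nsq]))
    have := (wedge_eq_zero_iff hp hq).1 h
    rw [hn] at this
    exact smul_right_injective E (nsq_pos hq).ne' this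

lemma exists_wedge_ne {p : V} (hp : p ≠ 0) : ∃ w, wedge w p ≠ 0 := by
  by_contra! h
  have h1 := h (1, 0)
  have h2 := h (0, 1)
  simp [wedge] at h1 h2
  exact hp (Prod.ext h2 h1)

section main
variable {G : Type*} [Group G] [Fintype G] (ρ : G →* Matrix (Fin 3) (Fin 3) ℝ)
  (U : G → V →ₗ[ℂ] V)

/-- the orbit form -/
noncomputable def orb (p w : V) : ℂ := ∏ g, wedge (U g p) w

lemma orb_form (p : V) : IsForm (Fintype.card G) (orb U p) := isForm_prod Finset.univ (fun g => U g p)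

lemma orb_smul (p w : V) (c : ℂ) : orb U p (c • w) = c ^ (Fintype.card G) * orb U p w := by
  simp [orb, wedge_smul_right, Finset.prod_mul_distrib]

lemma orb_continuous (w : V) : Continuous (fun p => orb U p w) := by
  unfold orb
  refine continuous_finsetProd _ fun g _ => ?_
  exact continuousOn_univ.1 (analytic_wedge_const (U g) w).continuousOn

lemma orb_continuous' (p : V) : Continuous (fun w => orb U p w) := by
  unfold orb wedge
  fun_prop

variable {U ρ} (hU : ∀ g, IsLift (ρ g) (U g)) (hiso : ∀ g x, ‖act (ρ g) x‖ = ‖x‖)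

include hU hiso in
lemma nsq_U (g : G) (v : V) : nsq (U g v) = nsq v := by
  rw [← norm_hopf, (hU g).2, hiso, norm_hopf]

include hU hiso in
lemma U_ne (g : G) {v : V} (hv : v ≠ 0) : U g v ≠ 0 := fun h => hv (by
  rw [← nsq_eq_zero, ← nsq_U hU hiso g, h]; simp [nsq])

include hU hiso in
lemma U_surj (g : G) (w : V) : ∃ v, U g v = w := by
  have : Function.Injective (U g) := by
    rw [injective_iff_map_eq_zero]
    intro v hv
    by_contra h
    exact U_ne hU hiso g h hv
  exact LinearMap.injective_iff_surjective.1 this w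

include hU hiso in
lemma orb_char {p : V} (hp : p ≠ 0) (g : G) : ∃ χ : ℂ, ∀ w, orb U p (U g w) = χ * orb U p w := by
  obtain ⟨d, hd, hd2⟩ := (hU g).1
  have h : ∀ k : G, ∃ c : ℂ, U k p = c • U g (U (g⁻¹ * k) p) := by
    intro k
    refine exists_smul_of_wedge (U_ne hU hiso _ (U_ne hU hiso _ hp)) (wedge_of_hopf_eq ?_)
    rw [(hU _).2, (hU _).2, (hU _).2, ← act_mul, ← map_mul]
    simp
  choose c hc using h
  refine ⟨∏ k, (c k * d), fun w => ?_⟩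
  have : orb U p w = ∏ k, wedge (U (g⁻¹ * k) p) w :=
    (Fintype.prod_equiv (Equiv.mulLeft g⁻¹) _ _ (fun k => rfl)).symm
  rw [this, ← Finset.prod_mul_distrib]
  unfold orb
  refine Finset.prod_congr rfl fun k _ => ?_
  rw [hc k, wedge_smul_left, hd2, mul_assoc]

include hU hiso in
lemma orb_eq_zero_symm {p q : V} (hq : q ≠ 0) (hp : p ≠ 0) (h : orb U p q = 0) : orb U q p = 0 := by
  unfold orb at h ⊢
  rw [Finset.prod_eq_zero_iff] at h ⊢
  obtain ⟨g, -, hg⟩ := h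
  refine ⟨g⁻¹, Finset.mem_univ _, ?_⟩
  obtain ⟨c, hc⟩ := exists_smul_of_wedge (U_ne hU hiso g hp) hg
  rw [hc, map_smul, wedge_smul_left]
  rw [wedge_of_hopf_eq, mul_zero]
  rw [(hU _).2, (hU _).2, ← act_mul, ← map_mul]
  simp [act]

include hU hiso in
theorem main (hinj : Function.Injective ρ) : ∃ Ψ : V → E, Continuous Ψ ∧ (∀ v, ‖Ψ v‖ = nsq v) ∧
    Function.Surjective Ψ ∧ ∀ v w, Ψ v = Ψ w ↔ ∃ g, act (ρ g) (hopf v) = hopf w := by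
  classical
  set N := Fintype.card G with hN
  have hN0 : N ≠ 0 := Fintype.card_ne_zero
  -- eigenvectors
  have heig : ∀ g, ∃ (l : ℂ) (e : V), e ≠ 0 ∧ U g e = l • e := by
    intro g
    obtain ⟨l, hl⟩ := Module.End.exists_eigenvalue (U g)
    obtain ⟨e, he⟩ := hl.exists_hasEigenvector
    exact ⟨l, e, he.2, he.apply_eq_smul⟩
  choose l e he0 he using heig
  have wne : ∀ (g : G) {x : V}, x ≠ 0 → ∃ v, wedge (U g v) x ≠ 0 := by
    intro g x hx
    obtain ⟨w, hw⟩ := exists_wedge_ne hx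
    obtain ⟨v, rfl⟩ := U_surj hU hiso g w
    exact ⟨v, hw⟩
  -- generic points avoiding finitely many orbits
  have hgen : ∀ x : V, x ≠ 0 → ∃ p : V, p.2 ≠ 0 ∧ (∀ g, orb U p (e g) ≠ 0) ∧ orb U p x ≠ 0 := by
    intro x hx
    have := dense_generic (ι := Option (Option G × G)) (fun i => match i with
      | none => fun z => wedge z (1, 0)
      | some (none, k) => fun z => wedge (U k z) x
      | some (some g, k) => fun z => wedge (U k z) (e g)) (by
        rintro (_ | ⟨_ | g, k⟩)
        · exact analytic_wedge_const LinearMap.id _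
        · exact analytic_wedge_const _ _
        · exact analytic_wedge_const _ _) (by
        rintro (_ | ⟨_ | g, k⟩)
        · exact exists_wedge_ne (by simp)
        · exact wne k hx
        · exact wne k (he0 g))
    obtain ⟨p, hp⟩ := this.nonempty
    refine ⟨p, ?_, ?_, ?_⟩
    · have := hp none
      simp only [wedge] at this
      intro h
      simp [h] at this
    · intro g
      exact Finset.prod_ne_zero_iff.2 fun k _ => hp (some (some g, k))
    · exact Finset.prod_ne_zero_iff.2 fun k _ => hp (some (none, k))
  obtain ⟨p0, hp02, hp0e, -⟩ := hgen (1, 0) (by simp)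
  have hp0 : p0 ≠ 0 := fun h => hp02 (by simp [h])
  obtain ⟨p1, hp12, hp1e, hp10⟩ := hgen p0 hp0
  have hp1 : p1 ≠ 0 := fun h => hp12 (by simp [h])
  have hp01 : orb U p0 p1 ≠ 0 := fun h => hp10 (orb_eq_zero_symm hU hiso hp1 hp0 h)
  have hchar : ∀ p : V, p ≠ 0 → (∀ g, orb U p (e g) ≠ 0) → ∀ g w,
      orb U p (U g w) = l g ^ N * orb U p w := by
    intro p hp hpe g w
    obtain ⟨χ, hχ⟩ := orb_char hU hiso hp g
    have h1 := hχ (e g)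
    rw [he, orb_smul] at h1
    rw [hχ, ← mul_right_cancel₀ (hpe g) h1]
  have hc0 := hchar p0 hp0 hp0e
  have hc1 := hchar p1 hp1 hp1e
  set D : V → V → ℂ := fun z w => orb U p0 z * orb U p1 w - orb U p1 z * orb U p0 w with hD
  have hDself : ∀ g z, D z (U g z) = 0 := by
    intro g z
    simp only [hD, hc0, hc1]; ring
  -- main identity
  have hid : ∀ u : V, u.2 ≠ 0 → ∀ z w, orb U z w * D z u = orb U z u * D z w := by
    intro u hu2 z w
    have hu : u ≠ 0 := fun h => hu2 (by simp [h])
    have hdense := dense_generic (ι := G ⊕ G ⊕ {gk : G × G // gk.1 ≠ gk.2}) (fun i => match i with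
      | .inl g => fun z => wedge (U g z) (1, 0)
      | .inr (.inl g) => fun z => wedge (U g z) u
      | .inr (.inr gk) => fun z => wedge (U gk.1.1 z) (U gk.1.2 z)) (by
        rintro (g | g | gk)
        · exact analytic_wedge_const _ _
        · exact analytic_wedge_const _ _
        · exact analytic_wedge _ _) (by
        rintro (g | g | gk)
        · exact wne g (by simp)
        · exact wne g hu
        · by_contra! h
          apply gk.2
          apply hinj
          have h2 : ∀ x, act (ρ gk.1.1) x = act (ρ gk.1.2) x := by
            intro x
            obtain ⟨v, rfl⟩ := hopf_surj x
            rw [← (hU _).2, ← (hU _).2]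
            exact hopf_eq_of_wedge (h v) (by rw [nsq_U hU hiso, nsq_U hU hiso])
          apply Matrix.toLin'.injective
          ext1 i
          ext j
          have := congrArg (fun x : E => x j) (h2 (WithLp.toLp 2 (Pi.single i 1)))
          simpa [act] using this)
    have hclosed : IsClosed {z : V | orb U z w * D z u = orb U z u * D z w} := by
      have c1 := orb_continuous' U p0
      have c2 := orb_continuous' U p1
      refine isClosed_eq ?_ ?_
      · exact (orb_continuous U w).mul ((c1.mul continuous_const).sub (c2.mul continuous_const))
      · exact (orb_continuous U u).mul ((c1.mul continuous_const).sub (c2.mul continuous_const))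
    have hall : ∀ z : V, z ∈ {z : V | orb U z w * D z u = orb U z u * D z w} := by
      refine fun z => hclosed.closure_subset_iff.2 ?_ (hdense z)
      intro z hz
      have hform : IsForm N (fun w => D z u * orb U z w + (- orb U z u) * 
          (orb U p0 z * orb U p1 w + (- orb U p1 z) * orb U p0 w)) :=
        (orb_form U z).comb ((orb_form U p1).comb (orb_form U p0) _ _) _ _
      have := hform.eq_zero (ι := Option G) (by simp [hN]) (fun i => match i with
        | none => u
        | some g => U g z) (by
          rintro (_ | g)
          · exact hu2
          · have := hz (.inl g)
            simp only [wedge] at this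
            intro h
            simp [h] at this) (by
          rintro (_ | g) (_ | k) hgk
          · exact absurd rfl hgk
          · have := hz (.inr (.inl k))
            simp only [wedge] at this ⊢
            intro h
            apply this
            linear_combination -h
          · exact hz (.inr (.inl g))
          · exact hz (.inr (.inr ⟨(g, k), fun h => hgk (congrArg some h)⟩))) (by
          rintro (_ | g)
          · simp only [hD]; ring
          · have h1 : orb U z (U g z) = 0 :=
              Finset.prod_eq_zero (Finset.mem_univ g) (wedge_self _)
            have h2 := hDself g z
            simp only [hD] at h2
            simp only [h1]
            linear_combination -(orb U z u) * h2) w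
      simp only [Set.mem_ofPred_eq]
      simp only [hD] at this ⊢
      linear_combination this
    exact hall z
  -- the map
  set F : V → V := fun v => (orb U p0 v, orb U p1 v) with hF
  have hFw : ∀ v w, wedge (F v) (F w) = D v w := fun v w => rfl
  have hFc : Continuous F := (orb_continuous' U p0).prodMk (orb_continuous' U p1)
  have hFs : ∀ (c : ℂ) v, F (c • v) = c ^ N • F v := by
    intro c v
    simp only [hF, orb_smul]; rfl
  have hDz : ∀ z w, z ≠ 0 → w ≠ 0 → F z ≠ 0 → D z w = 0 → orb U z w = 0 := by
    intro z w hz hw hFz hD0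
    by_cases h0 : orb U p0 z = 0
    · have h1 : orb U p1 z ≠ 0 := fun h1 => hFz (Prod.ext h0 h1)
      have := hid p1 hp12 z w
      rw [hD0, mul_zero, mul_eq_zero] at this
      refine this.resolve_right ?_
      simp only [hD, h0, zero_mul, zero_sub, neg_ne_zero]
      exact mul_ne_zero h1 hp01
    · have := hid p0 hp02 z w
      rw [hD0, mul_zero, mul_eq_zero] at this
      refine this.resolve_right ?_
      have h00 : orb U p0 p0 = 0 := by
        refine Finset.prod_eq_zero (Finset.mem_univ 1) (wedge_of_hopf_eq ?_)
        rw [(hU _).2]; simp [act]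
      simp only [hD, h00, mul_zero, sub_zero]
      exact mul_ne_zero h0 hp10
  have hF0 : ∀ v, v ≠ 0 → F v ≠ 0 := by
    intro v hv h
    have h0 : orb U p0 v = 0 := congrArg Prod.fst h
    have h1 : orb U p1 v = 0 := congrArg Prod.snd h
    have h0' := h0
    unfold orb at h0
    rw [Finset.prod_eq_zero_iff] at h0
    obtain ⟨g, -, hg⟩ := h0
    obtain ⟨c, hc⟩ := exists_smul_of_wedge (U_ne hU hiso g hp0) hg
    have hc0 : c ≠ 0 := fun h => hv (by rw [hc, h, zero_smul])
    rw [hc, orb_smul, mul_eq_zero] at h1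
    have h1 := h1.resolve_left (pow_ne_zero _ hc0)
    have h2 := orb_eq_zero_symm hU hiso (U_ne hU hiso g hp0) hp1 h1
    unfold orb at h2
    rw [Finset.prod_eq_zero_iff] at h2
    obtain ⟨k, -, hk⟩ := h2
    apply hp01
    refine Finset.prod_eq_zero (Finset.mem_univ (k * g)) ?_
    have : wedge (U k (U g p0)) (U (k * g) p0) = 0 := by
      apply wedge_of_hopf_eq
      rw [(hU _).2, (hU _).2, (hU _).2, map_mul, act_mul]
    obtain ⟨c', hc'⟩ := exists_smul_of_wedge (U_ne hU hiso k (U_ne hU hiso g hp0)) this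
    rw [hc', wedge_smul_left, hk, mul_zero]
  set Ψ : V → E := fun v => (nsq v / nsq (F v)) • hopf (F v) with hΨ
  have hnorm : ∀ v, ‖Ψ v‖ = nsq v := by
    intro v
    by_cases hv : v = 0
    · simp [hΨ, hv, nsq]
    · have := nsq_pos (hF0 v hv)
      simp only [hΨ]
      rw [norm_smul, norm_hopf, Real.norm_of_nonneg (div_nonneg (nsq_nonneg _) (nsq_nonneg _))]
      field_simp
  have hΨw : ∀ v w, v ≠ 0 → w ≠ 0 → (Ψ v = Ψ w ↔ nsq v = nsq w ∧ D v w = 0) := by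
    intro v w hv hw
    have a1 := nsq_pos hv
    have a2 := nsq_pos hw
    have b1 := nsq_pos (hF0 v hv)
    have b2 := nsq_pos (hF0 w hw)
    rw [← hFw]
    have key : nsq v = nsq w → (Ψ v = Ψ w ↔ nsq (F w) • hopf (F v) = nsq (F v) • hopf (F w)) := by
      intro hvw
      simp only [hΨ, hvw]
      have t : (nsq w / (nsq (F v) * nsq (F w))) ≠ 0 := by positivity
      have e1 : (nsq w / nsq (F v)) • hopf (F v) =
          (nsq w / (nsq (F v) * nsq (F w))) • (nsq (F w) • hopf (F v)) := by
        rw [smul_smul]; congr 1; field_simp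
      have e2 : (nsq w / nsq (F w)) • hopf (F w) =
          (nsq w / (nsq (F v) * nsq (F w))) • (nsq (F v) • hopf (F w)) := by
        rw [smul_smul]; congr 1; field_simp
      rw [e1, e2]
      exact ⟨fun h => smul_right_injective E t h, fun h => by rw [h]⟩
    rw [wedge_eq_zero_iff (hF0 v hv) (hF0 w hw)]
    constructor
    · intro h
      have hvw : nsq v = nsq w := by rw [← hnorm, ← hnorm, h]
      exact ⟨hvw, (key hvw).1 h⟩
    · rintro ⟨hvw, h⟩
      exact (key hvw).2 h
  refine ⟨Ψ, ?_, hnorm, ?_, ?_⟩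
  · rw [continuous_iff_continuousAt]
    intro v
    by_cases hv : v = 0
    · subst hv
      have h0 : Ψ 0 = 0 := by rw [← norm_eq_zero, hnorm]; simp [nsq]
      unfold ContinuousAt
      rw [h0, tendsto_zero_iff_norm_tendsto_zero]
      simp only [hnorm]
      have := nsq_continuous.tendsto 0
      have h00 : nsq 0 = 0 := by simp [nsq]
      rwa [h00] at this
    · have := nsq_pos (hF0 v hv)
      exact (ContinuousAt.div nsq_continuous.continuousAt
        (nsq_continuous.comp hFc).continuousAt this.ne').smul (hopf_continuous.comp hFc).continuousAt
  · intro y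
    obtain ⟨q, rfl⟩ := hopf_surj y
    by_cases hq : q = 0
    · refine ⟨0, ?_⟩
      rw [← sub_eq_zero, hq]
      have h1 : Ψ 0 = 0 := by rw [← norm_eq_zero, hnorm]; simp [nsq]
      have h2 : hopf 0 = 0 := by rw [← norm_eq_zero, norm_hopf]; simp [nsq]
      rw [h1, h2, sub_zero]
    · obtain ⟨v, hv, hv0⟩ := ((orb_form U p0).comb (orb_form U p1) q.2 (-q.1)).exists_root hN0
      have a1 := nsq_pos hv
      have a2 := nsq_pos hq
      set c : ℂ := ((Real.sqrt (nsq q / nsq v) : ℝ) : ℂ) with hc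
      have hcs : Complex.normSq c = nsq q / nsq v := by
        rw [hc, Complex.normSq_ofReal, Real.mul_self_sqrt (by positivity)]
      have hn : nsq (c • v) = nsq q := by
        rw [nsq_smul, hcs]; field_simp
      have hcv : c • v ≠ 0 := fun h => hq (nsq_eq_zero.1 (by rw [← hn, h]; simp [nsq]))
      have hw : wedge (F (c • v)) q = 0 := by
        rw [hFs, wedge_smul_left]
        have : wedge (F v) q = 0 := by
          simp only [hF, wedge]; linear_combination hv0
        rw [this, mul_zero]
      refine ⟨c • v, ?_⟩
      have b := nsq_pos (hF0 _ hcv)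
      have h3 := (wedge_eq_zero_iff (hF0 _ hcv) hq).1 hw
      simp only [hΨ]
      rw [hn, div_eq_inv_mul, mul_smul, h3, smul_smul, inv_mul_cancel₀ b.ne', one_smul]
  · intro v w
    constructor
    · intro h
      have hvw : nsq v = nsq w := by rw [← hnorm, ← hnorm, h]
      by_cases hv : v = 0
      · have hw : w = 0 := nsq_eq_zero.1 (by rw [← hvw, hv]; simp [nsq])
        exact ⟨1, by rw [hv, hw]; simp [act]⟩
      · have hw : w ≠ 0 := fun hw => hv (nsq_eq_zero.1 (by rw [hvw, hw]; simp [nsq]))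
        have h1 := hDz v w hv hw (hF0 v hv) ((hΨw v w hv hw).1 h).2
        unfold orb at h1
        rw [Finset.prod_eq_zero_iff] at h1
        obtain ⟨g, -, hg⟩ := h1
        refine ⟨g, ?_⟩
        rw [← (hU g).2]
        exact hopf_eq_of_wedge hg (by rw [nsq_U hU hiso, hvw])
    · rintro ⟨g, hg⟩
      have hvw : nsq v = nsq w := by rw [← norm_hopf w, ← hg, hiso, norm_hopf]
      by_cases hv : v = 0
      · have hw : w = 0 := nsq_eq_zero.1 (by rw [← hvw, hv]; simp [nsq])
        rw [hv, hw]
      · have hw : w ≠ 0 := fun hw => hv (nsq_eq_zero.1 (by rw [hvw, hw]; simp [nsq]))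
        rw [hΨw v w hv hw]
        refine ⟨hvw, ?_⟩
        rw [← (hU g).2] at hg
        obtain ⟨c, hc⟩ := exists_smul_of_wedge (U_ne hU hiso g hv) (wedge_of_hopf_eq hg)
        rw [hc]
        simp only [hD, orb_smul]
        have := hDself g v
        simp only [hD] at this
        linear_combination c ^ N * this

end main

lemma quot_homeo {X Y : Type*} [TopologicalSpace X] [TopologicalSpace Y] (r : X → X → Prop)
    (f : X → Y) (hc : Continuous f) (hcl : IsClosedMap f) (hs : Function.Surjective f)
    (hr : ∀ x y, f x = f y ↔ r x y) : Nonempty (Quot r ≃ₜ Y) := by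
  have hq : Topology.IsQuotientMap f := hcl.isQuotientMap hc hs
  let F : Quot r → Y := Quot.lift f (fun x y h => (hr x y).2 h)
  have hF : Continuous F := continuous_quot_lift _ hc
  have h1 : Topology.IsQuotientMap F := Topology.IsQuotientMap.of_comp continuous_quot_mk hF hq
  have h2 : Function.Injective F := by
    rintro ⟨x⟩ ⟨y⟩ h
    exact Quot.sound ((hr x y).1 h)
  exact ⟨(isHomeomorph_iff_isQuotientMap_injective.2 ⟨h1, h2⟩).homeomorph⟩

theorem exists_map (Γ : Subgroup (Matrix.orthogonalGroup (Fin 3) ℝ)) (hΓfin : Finite Γ)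
    (hdet : ∀ g ∈ Γ, (g : Matrix (Fin 3) (Fin 3) ℝ).det = 1) :
    ∃ Φ : E → E, Continuous Φ ∧ IsClosedMap Φ ∧ (∀ x, ‖Φ x‖ = ‖x‖) ∧ Function.Surjective Φ ∧
      ∀ x y, Φ x = Φ y ↔ ∃ g ∈ Γ, (g : Matrix (Fin 3) (Fin 3) ℝ).mulVec x = y := by
  have : Fintype Γ := Fintype.ofFinite Γ
  let ρ : Γ →* Matrix (Fin 3) (Fin 3) ℝ := (Submonoid.subtype _).comp Γ.subtype
  have hρ : ∀ g : Γ, ρ g = (g.1 : Matrix (Fin 3) (Fin 3) ℝ) := fun g => rfl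
  have horth : ∀ g : Γ, ρ g * (ρ g)ᵀ = 1 := fun g =>
    (Matrix.mem_orthogonalGroup_iff (Fin 3) ℝ).1 g.1.2
  have hinj : Function.Injective ρ := fun a b h => Subtype.ext (Subtype.ext h)
  have hiso : ∀ g x, ‖act (ρ g) x‖ = ‖x‖ := by
    intro g x
    have h' : (ρ g)ᵀ * ρ g = 1 := mul_eq_one_comm.1 (horth g)
    rw [← sq_eq_sq₀ (norm_nonneg _) (norm_nonneg _), EuclideanSpace.norm_sq_eq,
      EuclideanSpace.norm_sq_eq]
    have h1 : ∀ z : Fin 3 → ℝ, ∑ i, ‖z i‖ ^ 2 = z ⬝ᵥ z := by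
      intro z; simp [dotProduct, sq]
    rw [h1, h1]
    simp only [act]
    rw [Matrix.dotProduct_mulVec, ← Matrix.mulVec_transpose, Matrix.mulVec_mulVec, h',
      Matrix.one_mulVec]
  choose U hU using fun g : Γ => exists_lift (ρ g) (horth g) (hdet g.1 g.2)
  obtain ⟨Ψ, hc, hn, hs, hf⟩ := main hU hiso hinj
  have hcl := isClosedMap_of_norm hc hn
  have hq : Topology.IsQuotientMap hopf :=
    (isClosedMap_of_norm hopf_continuous norm_hopf).isQuotientMap hopf_continuous hopf_surj
  let Φ : E → E := fun x => Ψ (Function.surjInv hopf_surj x)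
  have hΦ : ∀ v, Φ (hopf v) = Ψ v := by
    intro v
    refine (hf _ _).2 ⟨1, ?_⟩
    rw [Function.surjInv_eq hopf_surj]
    simp [act]
  have hcomp : Φ ∘ hopf = Ψ := funext hΦ
  refine ⟨Φ, ?_, ?_, ?_, ?_, ?_⟩
  · rw [hq.continuous_iff, hcomp]; exact hc
  · intro C hC
    have : Φ '' C = Ψ '' (hopf ⁻¹' C) := by
      rw [← hcomp, Set.image_comp, Set.image_preimage_eq _ hopf_surj]
    rw [this]
    exact hcl _ (hC.preimage hopf_continuous)
  · intro x
    obtain ⟨v, rfl⟩ := hopf_surj x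
    rw [hΦ, hn, norm_hopf]
  · intro y
    obtain ⟨v, rfl⟩ := hs y
    exact ⟨hopf v, hΦ v⟩
  · intro x y
    obtain ⟨v, rfl⟩ := hopf_surj x
    obtain ⟨w, rfl⟩ := hopf_surj y
    rw [hΦ, hΦ, hf]
    constructor
    · rintro ⟨g, hg⟩
      exact ⟨g.1, g.2, congrArg WithLp.ofLp hg⟩
    · rintro ⟨g, hg, h⟩
      exact ⟨⟨g, hg⟩, congrArg (WithLp.toLp 2) h⟩

end SO3Q

/-- Every finite subgroup Γ of SO(3) (orthogonal matrices of determinant 1) acting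
standardly on S² has quotient S²/Γ homeomorphic to S²; consequently the quotient
ℝ³/Γ is homeomorphic to ℝ³.  (Quotients carry the quotient topology.) -/
theorem stmt_3 (Γ : Subgroup (Matrix.orthogonalGroup (Fin 3) ℝ)) (hΓfin : Finite Γ)
    (hdet : ∀ g ∈ Γ, (g : Matrix (Fin 3) (Fin 3) ℝ).det = 1) :
    Nonempty (Quot (soRel Γ (Metric.sphere (0 : EuclideanSpace ℝ (Fin 3)) 1)) ≃ₜ
        Metric.sphere (0 : EuclideanSpace ℝ (Fin 3)) 1) ∧
    Nonempty (Quot (soRel Γ (Set.univ : Set (EuclideanSpace ℝ (Fin 3)))) ≃ₜ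
        EuclideanSpace ℝ (Fin 3)) := by
  obtain ⟨Φ, hc, hcl, hn, hs, hf⟩ := SO3Q.exists_map Γ hΓfin hdet
  constructor
  · have hmem : ∀ x : Metric.sphere (0 : EuclideanSpace ℝ (Fin 3)) 1,
        Φ x ∈ Metric.sphere (0 : EuclideanSpace ℝ (Fin 3)) 1 := by
      intro x
      rw [mem_sphere_zero_iff_norm, hn]
      exact mem_sphere_zero_iff_norm.1 x.2
    have hc' : Continuous (fun x : Metric.sphere (0 : EuclideanSpace ℝ (Fin 3)) 1 =>
        (⟨Φ x, hmem x⟩ : Metric.sphere (0 : EuclideanSpace ℝ (Fin 3)) 1)) :=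
      (hc.comp continuous_subtype_val).subtype_mk _
    refine SO3Q.quot_homeo _ _ hc' hc'.isClosedMap ?_ ?_
    · rintro ⟨y, hy⟩
      obtain ⟨x, rfl⟩ := hs y
      rw [mem_sphere_zero_iff_norm, hn] at hy
      exact ⟨⟨x, mem_sphere_zero_iff_norm.2 hy⟩, rfl⟩
    · intro x y
      rw [Subtype.mk.injEq]
      exact hf x y
  · refine SO3Q.quot_homeo _ (fun x : (Set.univ : Set (EuclideanSpace ℝ (Fin 3))) => Φ x)
      (hc.comp continuous_subtype_val)
      (hcl.comp (Homeomorph.Set.univ (EuclideanSpace ℝ (Fin 3))).isClosedMap) ?_ ?_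
    · intro y
      obtain ⟨x, rfl⟩ := hs y
      exact ⟨⟨x, trivial⟩, rfl⟩
    · intro x y
      exact hf x y
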